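/- Suppose x, y ∈ ONC_N with x ≤_2 y. Then the Kreweras complement K_y(x) = x⁻¹y also belongs to ONC_N. -/

import Mathlib

open Equiv Equiv.Perm

/-- The word length of `x` with respect to a generating set `T`. -/
noncomputable def lenT {G : Type*} [Group G] (T : Set G) (x : G) : ℕ :=
  sInf {n | ∃ l : List G, (∀ t ∈ l, t ∈ T) ∧ l.prod = x ∧ l.length = n}

/-- The `T`-prefix order. -/
def leT {G : Type*} [Group G] (T : Set G) (x y : G) : Prop :=
  lenT T y = lenT T x + lenT T (x⁻¹ * y)

/-- The set of 3-cycles of the symmetric group on `Fin N`. -/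
def threeCycles (N : ℕ) : Set (Perm (Fin N)) := {σ | σ.IsThreeCycle}

/-- The set of transpositions of the symmetric group on `Fin N`. -/
def transpositions (N : ℕ) : Set (Perm (Fin N)) := {σ | σ.IsSwap}

/-- The number of odd cycles of a permutation, counting fixed points. -/
def ocyc {N : ℕ} (x : Perm (Fin N)) : ℕ :=
  (x.cycleType.filter (fun n => Odd n)).card + (N - x.cycleType.sum)

open scoped Classical in
/-- The support of the cycle of `x` containing `a` (a singleton for a fixed point). -/
noncomputable def orbitF {N : ℕ} (x : Perm (Fin N)) (a : Fin N) : Finset (Fin N) :=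
  Finset.univ.filter (fun b => x.SameCycle a b)

/-- Property (OD) for a cycle written as an increasing sequence `u₁ < u₂ < ⋯ < u_q`:
`q` is odd and all consecutive differences `u_{j+1} - u_j` are odd. -/
def ODfinset {N : ℕ} (S : Finset (Fin N)) : Prop :=
  Odd S.card ∧ (S.sort (· ≤ ·)).Chain' (fun a b => Odd ((b : ℕ) - (a : ℕ)))

/-- All cycles of `x`, written as increasing sequences, satisfy property (OD). -/
def satisfiesOD {N : ℕ} (x : Perm (Fin N)) : Prop := ∀ a : Fin N, ODfinset (orbitF x a)

/-- Membership in `ONC_N`: a noncrossing partition all of whose cycles satisfy (OD). -/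
def memONC {N : ℕ} (x : Perm (Fin N)) : Prop :=
  leT (transpositions N) x (finRotate N) ∧ satisfiesOD x

section aux
variable {N : ℕ}

/-- invariant functions -/
def invF (w : Perm (Fin N)) : Submodule ℚ (Fin N → ℚ) where
  carrier := {f | ∀ i, f (w i) = f i}
  add_mem' := by
    intro f g hf hg i
    simp [hf i, hg i]
  zero_mem' := by intro i; rfl
  smul_mem' := by
    intro c f hf i
    simp [hf i]

theorem mem_invF (w : Perm (Fin N)) (f : Fin N → ℚ) : f ∈ invF w ↔ ∀ i, f (w i) = f i := Iff.rfl

noncomputable def kap (w : Perm (Fin N)) : ℕ := N - Module.finrank ℚ (invF w)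

theorem kap_add (w : Perm (Fin N)) : kap w + Module.finrank ℚ (invF w) = N := by
  have h := Submodule.finrank_le (invF w)
  simp at h
  unfold kap; omega

theorem inf_le_mul (u v : Perm (Fin N)) : invF u ⊓ invF v ≤ invF (u * v) := by
  intro f hf i
  obtain ⟨h1, h2⟩ := Submodule.mem_inf.1 hf
  rw [mem_invF] at h1 h2
  simp [h1, h2]

theorem finrank_inf_ge (u v : Perm (Fin N)) :
    N ≤ Module.finrank ℚ (invF u ⊓ invF v : Submodule ℚ (Fin N → ℚ)) + kap u + kap v := by
  have h := Submodule.finrank_sup_add_finrank_inf_eq (invF u) (invF v)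
  have h2 := Submodule.finrank_le (invF u ⊔ invF v)
  simp at h2
  have := kap_add u
  have := kap_add v
  omega

theorem kap_mul (u v : Perm (Fin N)) : kap (u * v) ≤ kap u + kap v := by
  have h := Submodule.finrank_mono (inf_le_mul u v)
  have := finrank_inf_ge u v
  have := kap_add (u * v)
  omega

theorem invF_le_of_kap (u v : Perm (Fin N)) (h : kap u + kap v ≤ kap (u * v)) :
    invF (u * v) ≤ invF u := by
  have h1 := finrank_inf_ge u v
  have h2 := kap_add (u * v)
  have := Submodule.eq_of_le_of_finrank_le (inf_le_mul u v) (by omega)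
  rw [← this]
  exact inf_le_left

theorem invF_swap_mul (w : Perm (Fin N)) (a : Fin N) (ha : w a ≠ a) :
    kap (swap a (w a) * w) + 1 ≤ kap w := by
  have hlt : invF w < invF (swap a (w a) * w) := by
    refine lt_of_le_of_ne ?_ ?_
    · intro f hf i
      rw [mem_invF] at hf
      simp only [Perm.mul_apply]
      rw [← hf i]
      rcases eq_or_ne (w i) a with h | h
      · rw [h]; simp [hf]
      rcases eq_or_ne (w i) (w a) with h' | h'
      · rw [h']; simp [hf]
      rw [swap_apply_of_ne_of_ne h h']
    · intro he
      have : (fun i => if i = a then (1:ℚ) else 0) ∈ invF (swap a (w a) * w) := by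
        intro i
        have : (swap a (w a) * w) i = a ↔ i = a := by
          have h : (swap a (w a) * w) a = a := by simp
          constructor
          · intro h'
            exact (swap a (w a) * w).injective (h'.trans h.symm)
          · rintro rfl; exact h
        simp only [this]
      rw [← he] at this
      have := this a
      simp [ha] at this
  have := Submodule.finrank_lt_finrank_of_lt hlt
  have := kap_add w
  have := kap_add (swap a (w a) * w)
  omega

theorem kap_one : kap (1 : Perm (Fin N)) = 0 := by
  have : invF (1 : Perm (Fin N)) = ⊤ := by
    rw [eq_top_iff]; intro f _ i; rfl
  unfold kap
  rw [this]; simp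

theorem kap_swap (t : Perm (Fin N)) (ht : t.IsSwap) : kap t ≤ 1 := by
  obtain ⟨i, j, hij, rfl⟩ := ht
  let φ : (Fin N → ℚ) →ₗ[ℚ] ℚ := LinearMap.proj (R := ℚ) (φ := fun _ : Fin N => ℚ) i - LinearMap.proj (R := ℚ) (φ := fun _ : Fin N => ℚ) j
  have hle : LinearMap.ker φ ≤ invF (swap i j) := by
    intro f hf k
    have hf' : f i = f j := by
      have : f i - f j = 0 := hf
      linarith
    rcases eq_or_ne k i with rfl | h
    · simp [hf']
    rcases eq_or_ne k j with rfl | h'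
    · simp [hf']
    rw [swap_apply_of_ne_of_ne h h']
  have h1 := Submodule.finrank_mono hle
  have h2 := LinearMap.finrank_range_add_finrank_ker φ
  have h3 := Submodule.finrank_le (LinearMap.range φ)
  simp at h2 h3
  have := kap_add (swap i j)
  omega

theorem kap_prod (l : List (Perm (Fin N))) (h : ∀ t ∈ l, t ∈ transpositions N) :
    kap l.prod ≤ l.length := by
  induction l with
  | nil => simp [kap_one]
  | cons t l ih =>
    have h1 := kap_swap t (h t (by simp))
    have h2 := ih (fun s hs => h s (by simp [hs]))
    have := kap_mul t l.prod
    simp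
    omega

theorem exists_word (n : ℕ) : ∀ w : Perm (Fin N), kap w ≤ n →
    ∃ l : List (Perm (Fin N)), (∀ t ∈ l, t ∈ transpositions N) ∧ l.prod = w ∧
      l.length ≤ kap w := by
  induction n with
  | zero =>
    intro w hw
    have : w = 1 := by
      by_contra hne
      obtain ⟨a, ha⟩ : ∃ a, w a ≠ a := by
        by_contra! h
        exact hne (Equiv.ext h)
      have := invF_swap_mul w a ha
      omega
    subst this
    exact ⟨[], by simp⟩
  | succ n ih =>
    intro w hw
    by_cases hne : w = 1
    · subst hne
      exact ⟨[], by simp⟩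
    obtain ⟨a, ha⟩ : ∃ a, w a ≠ a := by
      by_contra! h
      exact hne (Equiv.ext h)
    have h1 := invF_swap_mul w a ha
    obtain ⟨l, hl, hp, hlen⟩ := ih (swap a (w a) * w) (by omega)
    refine ⟨swap a (w a) :: l, ?_, ?_, ?_⟩
    · intro t ht
      rcases List.mem_cons.1 ht with rfl | ht
      · exact ⟨a, w a, ha.symm, rfl⟩
      · exact hl t ht
    · simp [hp]
    · simp; omega

theorem lenT_eq_kap (w : Perm (Fin N)) : lenT (transpositions N) w = kap w := by
  obtain ⟨l, hl, hp, hlen⟩ := exists_word _ w le_rfl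
  have hm : l.length ∈ {n | ∃ l : List (Perm (Fin N)), (∀ t ∈ l, t ∈ transpositions N) ∧
      l.prod = w ∧ l.length = n} := ⟨l, hl, hp, rfl⟩
  unfold lenT
  apply le_antisymm
  · exact (Nat.sInf_le hm).trans hlen
  · apply le_csInf ⟨_, hm⟩
    rintro n ⟨l, hl, rfl, rfl⟩
    exact kap_prod l hl

theorem leT_iff (x y : Perm (Fin N)) :
    leT (transpositions N) x y ↔ kap y = kap x + kap (x⁻¹ * y) := by
  unfold leT
  simp only [lenT_eq_kap]

theorem kap_conj_le (x g : Perm (Fin N)) : kap (g⁻¹ * x * g) ≤ kap x := by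
  obtain ⟨l, hl, hp, hlen⟩ := exists_word _ x le_rfl
  have h : (l.map (fun t => g⁻¹ * t * g)).prod = g⁻¹ * x * g := by
    rw [← hp]
    clear hp hlen hl
    induction l with
    | nil => simp
    | cons t l ih => simp only [List.map_cons, List.prod_cons, ih]; group
  rw [← h]
  refine (kap_prod _ ?_).trans (by simpa using hlen)
  intro t ht
  obtain ⟨s, hs, rfl⟩ := List.mem_map.1 ht
  obtain ⟨i, j, hij, rfl⟩ := hl s hs
  refine ⟨g⁻¹ i, g⁻¹ j, by simpa using hij, ?_⟩
  have := Equiv.swap_apply_apply g⁻¹ i j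
  rw [this]; simp

theorem sameCycle_of_le {x y : Perm (Fin N)} (h : kap y = kap x + kap (x⁻¹ * y)) (d : Fin N) :
    y.SameCycle d (x d) := by
  classical
  have h1 := invF_le_of_kap x (x⁻¹ * y) (by simp [h])
  rw [mul_inv_cancel_left] at h1
  have h2 : (fun i => if y.SameCycle d i then (1:ℚ) else 0) ∈ invF y := by
    intro i
    simp [Perm.sameCycle_apply_right]
  have := h1 h2 d
  by_contra hc
  simp [hc] at this
  exact this (SameCycle.refl _ _)

theorem rot_val (i : Fin N) : ((finRotate N i : Fin N) : ℕ) = if (i : ℕ) + 1 = N then (0:ℕ) else (i:ℕ) + 1 := by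
  cases N with
  | zero => exact i.elim0
  | succ n =>
    rw [coe_finRotate]
    simp [Fin.ext_iff]

theorem inv_sameCycle {w : Perm (Fin N)} {f : Fin N → ℚ} (hf : f ∈ invF w) {a d : Fin N}
    (h : w.SameCycle a d) : f a = f d := by
  rw [mem_invF] at hf
  obtain ⟨k, rfl⟩ := h
  have hi : ∀ i, f (w⁻¹ i) = f i := by
    intro i
    have := hf (w⁻¹ i)
    simpa using this.symm
  induction k with
  | zero => simp
  | succ k ih => rw [add_comm, zpow_add]; simpa [hf] using ih
  | pred k ih => rw [sub_eq_neg_add, zpow_add, Perm.mul_apply, zpow_neg_one, hi]; exact ih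

/-- the cyclic-order property -/
def Cyc (y : Perm (Fin N)) : Prop := ∀ a d, y.SameCycle a d →
  (a < y a → ¬ (a < d ∧ d < y a)) ∧ (y a ≤ a → y a ≤ d ∧ d ≤ a)

theorem cyc_of_le {y : Perm (Fin N)} (h : kap (finRotate N) = kap y + kap (y⁻¹ * finRotate N)) :
    Cyc y := by
  classical
  intro a d had
  by_cases hfix : y a = a
  · have : d = a := ((Perm.SameCycle.eq_of_left had) hfix).symm
    subst this
    simp [hfix]
  set b := y a with hb
  set c := finRotate N with hc
  set t := swap a b with ht
  have h1 : kap (t * y) + 1 ≤ kap y := invF_swap_mul y a hfix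
  have h2 : kap c ≤ kap t + kap (t * c) := by
    have := kap_mul t (t * c)
    rwa [ht, swap_mul_self_mul] at this
  have h3 : kap t ≤ 1 := kap_swap t ⟨a, b, Ne.symm hfix, rfl⟩
  have e : (t * y) * (y⁻¹ * c) = t * c := by group
  have h4 := invF_le_of_kap (t * y) (y⁻¹ * c) (by rw [e]; omega)
  rw [e] at h4
  -- interval predicate
  let P : Fin N → Prop := fun i => if a < b then (a ≤ i ∧ i < b) else (i < b ∨ a ≤ i)
  have hP : (fun i => if P i then (1:ℚ) else 0) ∈ invF (t * c) := by
    intro i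
    have hr := rot_val i
    rw [← hc] at hr
    have : P ((t * c) i) ↔ P i := by
      simp only [Perm.mul_apply, ht, P, swap_apply_def]
      have hab : (a:ℕ) ≠ b := fun h => hfix (Fin.ext h.symm)
      have := a.2
      have := b.2
      have := i.2
      simp only [Fin.ext_iff, Fin.lt_def, Fin.le_def]
      split_ifs at * <;> omega
    simp only [this]
  have hQ := h4 hP
  rw [mem_invF] at hQ
  have hfa : (t * y) a = a := by simp [ht, ← hb]
  let Q : Fin N → Prop := fun i => P i ∧ i ≠ a
  have hQ2 : (fun i => if Q i then (1:ℚ) else 0) ∈ invF y := by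
    intro i
    have h5 : P ((t * y) i) ↔ P i := by
      have := hQ i
      by_cases h1 : P ((t * y) i) <;> by_cases h2 : P i <;>
        simp only [h1, h2, if_true, if_false] at this ⊢ <;> norm_num at this
    have h6 : (t * y) i = a ↔ i = a :=
      ⟨fun h' => (t * y).injective (h'.trans hfa.symm), fun h' => h' ▸ hfa⟩
    have h7 : Q ((t * y) i) ↔ Q i := by simp only [Q, h5, h6, ne_eq]
    have hna : ¬ Q a := by simp [Q]
    have hnb : ¬ Q b := by
      simp only [Q, P]
      split_ifs
      · simp
      · have hab : (a:ℕ) ≠ b := fun h => hfix (Fin.ext h.symm)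
        simp only [Fin.ext_iff, Fin.lt_def, Fin.le_def] at *
        omega
    have h8 : Q ((t * y) i) ↔ Q (y i) := by
      simp only [Perm.mul_apply, ht]
      rcases eq_or_ne (y i) a with h | h
      · rw [h]; simp [hna, hnb]
      rcases eq_or_ne (y i) b with h' | h'
      · rw [h']; simp [hna, hnb]
      rw [swap_apply_of_ne_of_ne h h']
    simp only [← h8, h7]
  have hd := inv_sameCycle hQ2 had
  have hnd : ¬ Q d := by
    intro h
    simp [h] at hd
    exact absurd hd.2 (by simp)
  have hab : (a:ℕ) ≠ b := fun h => hfix (Fin.ext h.symm)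
  simp only [Q, P] at hnd
  simp only [Fin.ext_iff, Fin.lt_def, Fin.le_def, ne_eq] at *
  split_ifs at hnd <;> omega

def Par (w : Perm (Fin N)) : Prop :=
  ∀ a, ((w a : ℕ) + a) % 2 = if a < w a then 1 else 0

theorem mem_orbitF (w : Perm (Fin N)) (a b : Fin N) : b ∈ orbitF w a ↔ w.SameCycle a b := by
  simp [orbitF]

theorem od_def (S : Finset (Fin N)) : ODfinset S ↔ Odd S.card ∧
    (S.sort (· ≤ ·)).IsChain (fun a b : Fin N => Odd ((b : ℕ) - (a : ℕ))) := by
  unfold ODfinset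
  refine and_congr_right fun _ => ?_
  have e : (do let a ← S.sort (· ≤ ·); pure (a : ℕ)) = (S.sort (· ≤ ·)).map (fun a : Fin N => (a : ℕ)) := by
    simp [List.map_eq_flatMap]
  rw [e]
  exact List.isChain_map _

theorem list_par (l : List (Fin N)) (hs : l.Pairwise (· < ·))
    (h : l.IsChain (fun a b : Fin N => Odd ((b : ℕ) - (a : ℕ)))) (i : ℕ) (hi : i < l.length) :
    ((l[i] : ℕ) + (l[0]'(by omega) : ℕ) + i) % 2 = 0 := by
  induction i with
  | zero => omega
  | succ i ih =>
    have h1 := List.isChain_iff_getElem.1 h i hi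
    have h2 := List.pairwise_iff_getElem.1 hs i (i+1) (by omega) hi (by omega)
    have h3 := ih (by omega)
    rw [Fin.lt_def] at h2
    rw [Nat.odd_iff] at h1
    omega

theorem od_iff {w : Perm (Fin N)} (hw : Cyc w) : satisfiesOD w ↔ Par w := by
  constructor
  · intro h a
    obtain ⟨h1, h2⟩ := (od_def _).1 (h a)
    set l := (orbitF w a).sort (· ≤ ·) with hl
    have hs : l.Pairwise (· < ·) := (Finset.sortedLT_sort _).pairwise
    have hlen : l.length = (orbitF w a).card := Finset.length_sort _
    have hmem : ∀ b, b ∈ l ↔ w.SameCycle a b := fun b => by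
      rw [hl, Finset.mem_sort, mem_orbitF]
    have hp := list_par l hs h2
    obtain ⟨i, hi, hia⟩ := List.getElem_of_mem ((hmem a).2 (SameCycle.refl _ _))
    obtain ⟨j, hj, hjb⟩ := List.getElem_of_mem ((hmem (w a)).2 (Perm.sameCycle_apply_right.2 (SameCycle.refl _ _)))
    have hlt := List.pairwise_iff_getElem.1 hs
    have hC := fun k (hk : k < l.length) => hw a l[k] ((hmem _).1 (List.getElem_mem hk))
    have pi := hp i hi
    have pj := hp j hj
    rw [hia] at pi
    rw [hjb] at pj
    have key : ∀ k m (hk : k < l.length) (hm : m < l.length), l[k] ≤ l[m] → k ≤ m := by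
      intro k m hk hm hkm
      by_contra hc
      exact absurd (hlt m k hm hk (by omega)) (not_lt.2 hkm)
    split_ifs with hab
    · have hij : i < j := by
        by_contra hc
        have : j = i ∨ j < i := by omega
        rcases this with rfl | hji
        · exact absurd (hia.symm.trans hjb) hab.ne
        · have := hlt j i hj hi hji
          rw [hia, hjb] at this
          exact lt_asymm this hab
      have : j = i + 1 := by
        by_contra hc
        have h3 := hlt i (i+1) hi (by omega) (by omega)
        have h4 := hlt (i+1) j (by omega) hj (by omega)
        rw [hia] at h3
        rw [hjb] at h4
        exact (hC (i+1) (by omega)).1 hab ⟨h3, h4⟩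
      omega
    · have hba := not_lt.1 hab
      have hj0 : j ≤ 0 := key j 0 hj (by omega) (by rw [hjb]; exact ((hC 0 (by omega)).2 hba).1)
      have hil : l.length - 1 ≤ i := key (l.length - 1) i (by omega) hi
        (by rw [hia]; exact ((hC _ (by omega)).2 hba).2)
      rw [Nat.odd_iff] at h1
      omega
  · intro h a
    rw [od_def]
    set l := (orbitF w a).sort (· ≤ ·) with hl
    have hs : l.Pairwise (· < ·) := (Finset.sortedLT_sort _).pairwise
    have hlen : l.length = (orbitF w a).card := Finset.length_sort _
    have hmem : ∀ b, b ∈ l ↔ w.SameCycle a b := fun b => by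
      rw [hl, Finset.mem_sort, mem_orbitF]
    have hlt := List.pairwise_iff_getElem.1 hs
    have key : ∀ k m (hk : k < l.length) (hm : m < l.length), l[k] ≤ l[m] → k ≤ m := by
      intro k m hk hm hkm
      by_contra hc
      exact absurd (hlt m k hm hk (by omega)) (not_lt.2 hkm)
    have key2 : ∀ k m (hk : k < l.length) (hm : m < l.length), l[k] < l[m] → k < m := by
      intro k m hk hm hkm
      have := key k m hk hm hkm.le
      rcases this.lt_or_eq with h | h
      · exact h
      · subst h; exact absurd hkm (lt_irrefl _)
    have hC := fun k m (hk : k < l.length) (hm : m < l.length) => hw l[m] l[k]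
      (((hmem _).1 (List.getElem_mem hm)).symm.trans ((hmem _).1 (List.getElem_mem hk)))
    have hnext : ∀ m (hm : m < l.length), ∃ j, ∃ hj : j < l.length, l[j] = w l[m] := by
      intro m hm
      apply List.getElem_of_mem
      rw [hmem, Perm.sameCycle_apply_right, ← hmem]
      exact List.getElem_mem hm
    have chain : l.IsChain (fun a b : Fin N => Odd ((b : ℕ) - (a : ℕ))) := by
      rw [List.isChain_iff_getElem]
      intro i hi
      obtain ⟨j, hj, hjw⟩ := hnext i (by omega)
      have hlt1 := hlt i (i+1) (by omega) hi (by omega)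
      have hC1 := hC (i+1) i hi (by omega)
      have hasc : l[i] < w l[i] := by
        by_contra hc
        exact absurd hlt1 (not_lt.2 (hC1.2 (not_lt.1 hc)).2)
      have h5 := hC1.1 hasc
      have hij := key2 i j (by omega) hj (by rw [hjw]; exact hasc)
      have : j = i + 1 := by
        by_contra hc
        exact h5 ⟨hlt1, by rw [← hjw]; exact hlt _ _ hi hj (by omega)⟩
      subst this
      have hpar := h l[i]
      rw [if_pos hasc, ← hjw] at hpar
      rw [Nat.odd_iff]
      rw [Fin.lt_def] at hlt1
      omega
    refine ⟨?_, chain⟩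
    have hpos : 0 < l.length := List.length_pos_of_mem ((hmem a).2 (SameCycle.refl _ _))
    obtain ⟨j, hj, hjw⟩ := hnext (l.length - 1) (by omega)
    have hdesc : w l[l.length - 1] ≤ l[l.length - 1] := by
      by_contra hc
      rw [← hjw] at hc
      have := key2 _ _ _ _ (not_le.1 hc)
      omega
    have hj0 := key j 0 hj hpos (by rw [hjw]; exact ((hC 0 _ hpos (by omega)).2 hdesc).1)
    have hj0' : j = 0 := by omega
    subst hj0'
    have hpar := h l[l.length - 1]
    rw [if_neg (not_lt.2 hdesc), ← hjw] at hpar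
    have := list_par l hs chain (l.length - 1) (by omega)
    rw [← hlen, Nat.odd_iff]
    omega

end aux

theorem stmt10 (N : ℕ) (x y : Perm (Fin N)) (hx : memONC x) (hy : memONC y)
    (hxy : leT (transpositions N) x y) : memONC (x⁻¹ * y) := by
  obtain ⟨hx1, hx2⟩ := hx
  obtain ⟨hy1, hy2⟩ := hy
  rw [leT_iff] at hx1 hy1 hxy
  have hz1 : kap (finRotate N) = kap (x⁻¹ * y) + kap ((x⁻¹ * y)⁻¹ * finRotate N) := by
    apply le_antisymm
    · have := kap_mul (x⁻¹ * y) ((x⁻¹ * y)⁻¹ * finRotate N)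
      rwa [mul_inv_cancel_left] at this
    · have h1 := kap_mul (y⁻¹ * x * y) (y⁻¹ * finRotate N)
      have h2 := kap_conj_le x y
      have e : (y⁻¹ * x * y) * (y⁻¹ * finRotate N) = (x⁻¹ * y)⁻¹ * finRotate N := by group
      rw [e] at h1
      omega
  refine ⟨(leT_iff _ _).2 hz1, (od_iff (cyc_of_le hz1)).2 ?_⟩
  have cy := cyc_of_le hy1
  have px := (od_iff (cyc_of_le hx1)).1 hx2
  have py := (od_iff cy).1 hy2
  intro a
  set d := (x⁻¹ * y) a with hd
  have hxd : x d = y a := by simp [hd]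
  have hs : y.SameCycle a d := by
    have h := sameCycle_of_le hxy d
    rw [hxd, Perm.sameCycle_apply_right] at h
    exact h.symm
  have hc := cy a d hs
  have h1 := px d
  have h2 := py a
  rw [hxd] at h1
  simp only [Fin.lt_def, Fin.le_def] at *
  split_ifs at * <;> omega
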